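/- Let x₀ ∈ ℝ², h₀ > 0, and let A, φ : ℝ² → ℝ be twice continuously differentiable on the closed ball of radius h₀ around x₀. Then there exists a constant C > 0 such that for all ω ≥ 1, all δ ≥ 0, all q ∈ ℝ² with ‖q − ∇φ(x₀)‖ ≤ δ, all h with 0 < h ≤ h₀, and all x with ‖x − x₀‖ ≤ h, one has |A(x)·e^{iωφ(x)} − (A(x₀) + ∇A(x₀)·(x − x₀))·e^{iω(φ(x₀) + q·(x − x₀))}| ≤ C·(h² + ω·h² + ω·h·δ). -/

import Mathlib

/-!
Both `A` and `φ` satisfy a first-order Taylor estimate with quadratic remainder on the closed ball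
(`taylor_closedBall`), because the second derivative is bounded on this compact set. Write `B` for
the Taylor polynomial of `A` and `ψ` for the affine phase with slope `q`. Replacing `∇φ(x₀)` by `q` costs at most `δ h`, so
`|φ - ψ| ≤ K h² + δ h`. As `t ↦ e^{it}` is `1`-Lipschitz, the splitting
`A e^{iωφ} - B e^{iωψ} = A (e^{iωφ} - e^{iωψ}) + (A - B) e^{iωψ}`
is bounded by `M ω (K h² + δ h) + K' h²`, where `M` bounds `|A|` on the ball.
-/

open scoped InnerProductSpace

lemma taylor_closedBall {x₀ : EuclideanSpace ℝ (Fin 2)} {r : ℝ} (hr : 0 < r)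
    {f : EuclideanSpace ℝ (Fin 2) → ℝ} (hf : ContDiffOn ℝ 2 f (Metric.closedBall x₀ r)) :
    ∃ K : ℝ, 0 ≤ K ∧ ∀ x, ‖x - x₀‖ ≤ r →
      |f x - (f x₀ + ⟪gradient f x₀, x - x₀⟫_ℝ)| ≤ K * ‖x - x₀‖ ^ 2 := by
  set s := Metric.closedBall x₀ r with hs
  have hconv : Convex ℝ s := convex_closedBall x₀ r
  have hu : UniqueDiffOn ℝ s := uniqueDiffOn_convex hconv
    ⟨x₀, Metric.ball_subset_interior_closedBall (Metric.mem_ball_self hr)⟩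
  have hx₀ : x₀ ∈ s := Metric.mem_closedBall_self hr.le
  have hg : ContDiffOn ℝ 1 (fderivWithin ℝ f s) s :=
    hf.fderivWithin hu (by norm_num)
  obtain ⟨K, hK⟩ := (isCompact_closedBall x₀ r).exists_bound_of_continuousOn
    (hg.continuousOn_fderivWithin hu le_rfl)
  have hK0 : 0 ≤ K := (norm_nonneg _).trans (hK x₀ hx₀)
  have hlip : ∀ y ∈ s, ‖fderivWithin ℝ f s y - fderivWithin ℝ f s x₀‖ ≤ K * ‖y - x₀‖ :=
    fun y hy => hconv.norm_image_sub_le_of_norm_fderivWithin_le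
      (hg.differentiableOn one_ne_zero) hK hx₀ hy
  -- At the centre, an interior point, the derivative within the ball is the gradient.
  have hgrad : ∀ v, fderivWithin ℝ f s x₀ v = ⟪gradient f x₀, v⟫_ℝ := by
    intro v
    rw [fderivWithin_of_mem_nhds (Metric.closedBall_mem_nhds x₀ hr), gradient,
      InnerProductSpace.toDual_symm_apply]
  refine ⟨K, hK0, fun x hx => ?_⟩
  -- On the smaller ball of radius `‖x - x₀‖` the derivative deviates by at most `K ‖x - x₀‖`.
  have hsub : Metric.closedBall x₀ ‖x - x₀‖ ⊆ s := Metric.closedBall_subset_closedBall hx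
  have key := (convex_closedBall x₀ ‖x - x₀‖).norm_image_sub_le_of_norm_hasFDerivWithin_le'
    (f := f) (f' := fderivWithin ℝ f s) (φ := fderivWithin ℝ f s x₀) (C := K * ‖x - x₀‖)
    (x := x₀) (y := x)
    (fun y hy => ((hf.differentiableOn two_ne_zero y (hsub hy)).hasFDerivWithinAt).mono hsub)
    (fun y hy => (hlip y (hsub hy)).trans
      (mul_le_mul_of_nonneg_left (mem_closedBall_iff_norm.1 hy) hK0))
    (Metric.mem_closedBall_self (norm_nonneg _)) (mem_closedBall_iff_norm.2 le_rfl)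
  rw [hgrad, Real.norm_eq_abs] at key
  calc _ = |f x - f x₀ - ⟪gradient f x₀, x - x₀⟫_ℝ| := by rw [sub_sub]
    _ ≤ _ := key
    _ = _ := by ring

lemma norm_exp_I_mul_sub_le (a b : ℝ) :
    ‖Complex.exp (Complex.I * (a : ℂ)) - Complex.exp (Complex.I * (b : ℂ))‖ ≤ |a - b| := by
  have h : Complex.exp (Complex.I * (a : ℂ)) - Complex.exp (Complex.I * (b : ℂ)) =
      Complex.exp (Complex.I * (b : ℂ)) * (Complex.exp (Complex.I * ((a - b : ℝ) : ℂ)) - 1) := by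
    rw [mul_sub, ← Complex.exp_add, mul_one]
    congr 2
    push_cast
    ring
  rw [h, norm_mul, Complex.norm_exp_I_mul_ofReal, one_mul]
  exact Real.norm_exp_I_mul_ofReal_sub_one_le

/-- The paper's estimate for the effect of a perturbed ray direction: if the exact ray
direction `∇φ(x₀)` in the local plane-wave approximation is replaced by an approximate
direction `q` with error at most `δ`, the error of the polynomial-modulated plane-wave
approximation becomes `O(h² + ω h² + ω h δ)`. -/
theorem planewave_local_approx_perturbed (x₀ : EuclideanSpace ℝ (Fin 2)) (h₀ : ℝ)
    (hh₀ : 0 < h₀) (A φ : EuclideanSpace ℝ (Fin 2) → ℝ)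
    (hA : ContDiffOn ℝ 2 A (Metric.closedBall x₀ h₀))
    (hφ : ContDiffOn ℝ 2 φ (Metric.closedBall x₀ h₀)) :
    ∃ C > 0, ∀ ω : ℝ, 1 ≤ ω → ∀ δ : ℝ, 0 ≤ δ →
      ∀ q : EuclideanSpace ℝ (Fin 2), ‖q - gradient φ x₀‖ ≤ δ →
        ∀ h : ℝ, 0 < h → h ≤ h₀ →
          ∀ x : EuclideanSpace ℝ (Fin 2), ‖x - x₀‖ ≤ h →
            ‖(A x : ℂ) * Complex.exp (Complex.I * ((ω * φ x : ℝ) : ℂ)) -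
                ((A x₀ + ⟪gradient A x₀, x - x₀⟫_ℝ : ℝ) : ℂ) *
                  Complex.exp
                    (Complex.I * ((ω * (φ x₀ + ⟪q, x - x₀⟫_ℝ) : ℝ) : ℂ))‖ ≤
              C * (h ^ 2 + ω * h ^ 2 + ω * h * δ) := by
  obtain ⟨K₁, hK₁, hTA⟩ := taylor_closedBall hh₀ hA
  obtain ⟨K₂, hK₂, hTφ⟩ := taylor_closedBall hh₀ hφ
  obtain ⟨M, hM⟩ := (isCompact_closedBall x₀ h₀).exists_bound_of_continuousOn hA.continuousOn
  have hM0 : 0 ≤ M := (norm_nonneg _).trans (hM x₀ (Metric.mem_closedBall_self hh₀.le))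
  refine ⟨M * K₂ + M + K₁ + 1, by positivity, ?_⟩
  intro ω hω δ hδ q hq h hh hhh x hx
  have hω0 : 0 ≤ ω := zero_le_one.trans hω
  have hsq : ‖x - x₀‖ ^ 2 ≤ h ^ 2 := pow_le_pow_left₀ (norm_nonneg _) hx 2
  have hAx : ‖A x‖ ≤ M := hM x (mem_closedBall_iff_norm.2 (hx.trans hhh))
  have h1 : |A x - (A x₀ + ⟪gradient A x₀, x - x₀⟫_ℝ)| ≤ K₁ * h ^ 2 :=
    (hTA x (hx.trans hhh)).trans (mul_le_mul_of_nonneg_left hsq hK₁)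
  have h2 : |φ x - (φ x₀ + ⟪gradient φ x₀, x - x₀⟫_ℝ)| ≤ K₂ * h ^ 2 :=
    (hTφ x (hx.trans hhh)).trans (mul_le_mul_of_nonneg_left hsq hK₂)
  have h3 : |⟪q - gradient φ x₀, x - x₀⟫_ℝ| ≤ δ * h :=
    (abs_real_inner_le_norm _ _).trans (mul_le_mul hq hx (norm_nonneg _) hδ)
  have h4 : |φ x - (φ x₀ + ⟪q, x - x₀⟫_ℝ)| ≤ K₂ * h ^ 2 + δ * h := by
    rw [inner_sub_left] at h3
    rw [abs_le] at h2 h3 ⊢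
    constructor <;> linarith [h2.1, h2.2, h3.1, h3.2]
  have h5 : ‖Complex.exp (Complex.I * ((ω * φ x : ℝ) : ℂ)) -
      Complex.exp (Complex.I * ((ω * (φ x₀ + ⟪q, x - x₀⟫_ℝ) : ℝ) : ℂ))‖ ≤
      ω * (K₂ * h ^ 2 + δ * h) := by
    refine (norm_exp_I_mul_sub_le _ _).trans ?_
    rw [← mul_sub, abs_mul, abs_of_nonneg hω0]
    exact mul_le_mul_of_nonneg_left h4 hω0
  set B : ℝ := A x₀ + ⟪gradient A x₀, x - x₀⟫_ℝ
  set θ : ℝ := ω * (φ x₀ + ⟪q, x - x₀⟫_ℝ)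
  have hsplit : (A x : ℂ) * Complex.exp (Complex.I * ((ω * φ x : ℝ) : ℂ)) -
      (B : ℂ) * Complex.exp (Complex.I * (θ : ℂ)) =
      (A x : ℂ) * (Complex.exp (Complex.I * ((ω * φ x : ℝ) : ℂ)) -
        Complex.exp (Complex.I * (θ : ℂ))) +
      ((A x - B : ℝ) : ℂ) * Complex.exp (Complex.I * (θ : ℂ)) := by
    rw [Complex.ofReal_sub]
    ring
  rw [hsplit]
  refine (norm_add_le _ _).trans ?_
  rw [norm_mul, norm_mul, Complex.norm_exp_I_mul_ofReal, mul_one, Complex.norm_real,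
    Complex.norm_real]
  have h6 := mul_le_mul hAx h5 (norm_nonneg _) hM0
  have h7 : ‖A x - B‖ ≤ K₁ * h ^ 2 := h1
  refine (add_le_add h6 h7).trans ?_
  -- The difference of the two sides is a sum of products of nonnegative quantities.
  have e1 : 0 ≤ (M * K₂ + M + 1) * h ^ 2 := by positivity
  have e2 : 0 ≤ (M + K₁ + 1) * (ω * h ^ 2) := by positivity
  have e3 : 0 ≤ (M * K₂ + K₁ + 1) * (ω * h * δ) := by positivity
  linarith
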